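/- A ring R is a uniquely √J-clean ring if and only if R is a √J-clean ring in which every idempotent is central. -/

import Mathlib

/-- `√J(R)`: the set of elements some positive power of which lies in the
Jacobson radical `J(R)` of the ring `R`. -/
def sqrtJ (R : Type*) [Ring R] : Set R :=
  {z : R | ∃ n : ℕ, 1 ≤ n ∧ z ^ n ∈ (⊥ : TwoSidedIdeal R).jacobson}

/-- `R` is a `√J`-clean ring: every element is the sum of an idempotent and an
element of `√J(R)`. -/
def IsSqrtJCleanRing (R : Type*) [Ring R] : Prop :=
  ∀ a : R, ∃ e z : R, IsIdempotentElem e ∧ z ∈ sqrtJ R ∧ a = e + z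

/-- `R` is a strongly `√J`-clean ring: every element is the sum of an idempotent
and an element of `√J(R)` that commute with each other. -/
def IsStronglySqrtJCleanRing (R : Type*) [Ring R] : Prop :=
  ∀ a : R, ∃ e z : R, IsIdempotentElem e ∧ z ∈ sqrtJ R ∧ a = e + z ∧ e * z = z * e

/-- `R` is a uniquely `√J`-clean ring: every element is uniquely the sum of an
idempotent and an element of `√J(R)`. -/
def IsUniquelySqrtJCleanRing (R : Type*) [Ring R] : Prop :=
  ∀ a : R, ∃! p : R × R, IsIdempotentElem p.1 ∧ p.2 ∈ sqrtJ R ∧ a = p.1 + p.2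

/-- `R` is a uniquely clean ring: every element is uniquely the sum of an
idempotent and a unit. -/
def IsUniquelyCleanRing (R : Type*) [Ring R] : Prop :=
  ∀ a : R, ∃! p : R × R, IsIdempotentElem p.1 ∧ IsUnit p.2 ∧ a = p.1 + p.2

/-!
If `e` is idempotent, then `e * x * (1 - e)` has square zero and `e + e * x * (1 - e)` is again
idempotent. It therefore has the two decompositions `(e + e * x * (1 - e)) + 0` and
`e + e * x * (1 - e)`, and uniqueness forces `e * x * (1 - e) = 0`. Applied to `e` and to `1 - e`,
this makes `e` central.

Conversely, let `e + z = f + w` with `e`, `f` central idempotents and `z`, `w` in `√J(R)`. Then `z`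
and `w` commute, so `e - f = w - z` is nilpotent modulo `J(R)`, and with it the idempotent
`e * (1 - f) = (e - f) * (1 - f)`. As `J(R)` contains no nonzero idempotent, `e * (1 - f) = 0`, and
`f * (1 - e) = 0` by symmetry.
-/

section

variable {R : Type*} [Ring R] {e f z w : R}

theorem eq_zero_of_isIdempotentElem_of_mem_jacobson_bot (he : IsIdempotentElem e)
    (heJ : e ∈ (⊥ : TwoSidedIdeal R).jacobson) : e = 0 := by
  obtain ⟨s, hs⟩ := TwoSidedIdeal.mem_jacobson_iff.mp heJ (-1)
  have left_inv : s * (1 - e) = 1 := by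
    rw [TwoSidedIdeal.mem_bot, sub_eq_zero] at hs
    rw [mul_sub, mul_one, sub_eq_neg_add, ← hs, mul_neg_one, neg_mul]
  calc
    e = s * (1 - e) * e := by rw [left_inv, one_mul]
    _ = 0 := by rw [mul_assoc, he.one_sub_mul_self, mul_zero]

theorem mem_sqrtJ_iff_isNilpotent_mk :
    z ∈ sqrtJ R ↔ IsNilpotent ((⊥ : TwoSidedIdeal R).jacobson.ringCon.mk' z) := by
  have mk_pow_eq_zero (n : ℕ) :
      (⊥ : TwoSidedIdeal R).jacobson.ringCon.mk' z ^ n = 0 ↔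
        z ^ n ∈ (⊥ : TwoSidedIdeal R).jacobson := by
    rw [← map_pow, ← TwoSidedIdeal.mem_ker, TwoSidedIdeal.ker_ringCon_mk']
  constructor
  · rintro ⟨n, -, hn⟩
    exact ⟨n, (mk_pow_eq_zero n).mpr hn⟩
  · rintro ⟨n, hn⟩
    exact ⟨n + 1, n.succ_pos, (mk_pow_eq_zero _).mp (pow_eq_zero_of_le n.le_succ hn)⟩

theorem mem_sqrtJ_of_isNilpotent (hz : IsNilpotent z) : z ∈ sqrtJ R :=
  mem_sqrtJ_iff_isNilpotent_mk.mpr (hz.map _)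

theorem neg_mem_sqrtJ (hz : z ∈ sqrtJ R) : -z ∈ sqrtJ R := by
  rw [mem_sqrtJ_iff_isNilpotent_mk] at hz ⊢
  rw [map_neg]
  exact hz.neg

theorem sub_mem_sqrtJ_of_commute (hzw : Commute z w) (hz : z ∈ sqrtJ R) (hw : w ∈ sqrtJ R) :
    z - w ∈ sqrtJ R := by
  rw [mem_sqrtJ_iff_isNilpotent_mk] at hz hw ⊢
  rw [map_sub]
  exact (hzw.map _).isNilpotent_sub hz hw

theorem mul_mem_sqrtJ_of_commute (hzw : Commute z w) (hz : z ∈ sqrtJ R) : z * w ∈ sqrtJ R := by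
  rw [mem_sqrtJ_iff_isNilpotent_mk] at hz ⊢
  rw [map_mul]
  exact (hzw.map _).isNilpotent_mul_right hz

theorem eq_zero_of_isIdempotentElem_of_mem_sqrtJ (he : IsIdempotentElem e) (hez : e ∈ sqrtJ R) :
    e = 0 := by
  obtain ⟨n, hn, hnJ⟩ := hez
  rw [he.pow_eq (Nat.one_le_iff_ne_zero.mp hn)] at hnJ
  exact eq_zero_of_isIdempotentElem_of_mem_jacobson_bot he hnJ

theorem mul_eq_left_of_commute_of_sub_mem_sqrtJ (he : IsIdempotentElem e)
    (hf : IsIdempotentElem f) (hef : Commute e f) (hsub : e - f ∈ sqrtJ R) : e * f = e := by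
  have idem : IsIdempotentElem (e * (1 - f)) :=
    .mul_of_commute ((Commute.one_right e).sub_right hef) he hf.one_sub
  have mem : e * (1 - f) ∈ sqrtJ R := by
    have comm : Commute (e - f) (1 - f) :=
      (Commute.one_right _).sub_right (hef.sub_left (Commute.refl f))
    simpa only [sub_mul, hf.mul_one_sub_self, sub_zero] using mul_mem_sqrtJ_of_commute comm hsub
  have zero := eq_zero_of_isIdempotentElem_of_mem_sqrtJ idem mem
  rw [mul_sub, mul_one, sub_eq_zero] at zero
  exact zero.symm

theorem eq_of_commute_of_sub_mem_sqrtJ (he : IsIdempotentElem e) (hf : IsIdempotentElem f)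
    (hef : Commute e f) (hsub : e - f ∈ sqrtJ R) : e = f := by
  have hsub' : f - e ∈ sqrtJ R := neg_sub e f ▸ neg_mem_sqrtJ hsub
  calc
    e = e * f := (mul_eq_left_of_commute_of_sub_mem_sqrtJ he hf hef hsub).symm
    _ = f * e := hef
    _ = f := mul_eq_left_of_commute_of_sub_mem_sqrtJ hf he hef.symm hsub'

theorem eq_and_eq_of_add_eq_add_of_commute (he : IsIdempotentElem e) (hf : IsIdempotentElem f)
    (hz : z ∈ sqrtJ R) (hw : w ∈ sqrtJ R) (hef : Commute e f) (hzw : Commute z w)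
    (hsum : e + z = f + w) : e = f ∧ z = w := by
  have hsub : e - f = w - z := by rw [sub_eq_sub_iff_add_eq_add, hsum, add_comm]
  obtain rfl := eq_of_commute_of_sub_mem_sqrtJ he hf hef
    (hsub ▸ sub_mem_sqrtJ_of_commute hzw.symm hw hz)
  exact ⟨rfl, add_left_cancel hsum⟩

theorem isNilpotent_mul_mul_one_sub (he : IsIdempotentElem e) (x : R) :
    IsNilpotent (e * x * (1 - e)) := by
  refine ⟨2, ?_⟩
  calc
    (e * x * (1 - e)) ^ 2 = e * x * ((1 - e) * e) * x * (1 - e) := by noncomm_ring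
    _ = 0 := by simp only [he.one_sub_mul_self, mul_zero, zero_mul]

theorem isIdempotentElem_add_mul_mul_one_sub (he : IsIdempotentElem e) (x : R) :
    IsIdempotentElem (e + e * x * (1 - e)) := by
  calc
    (e + e * x * (1 - e)) * (e + e * x * (1 - e))
        = e * e * (1 + x * (1 - e)) + e * x * ((1 - e) * e) * (1 + x * (1 - e)) := by noncomm_ring
    _ = e * (1 + x * (1 - e)) := by
      rw [he.eq, he.one_sub_mul_self, mul_zero, zero_mul, add_zero]
    _ = e + e * x * (1 - e) := by rw [mul_add, mul_one, mul_assoc]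

theorem commute_of_mul_mul_one_sub_eq_zero {x : R} (hl : e * x * (1 - e) = 0)
    (hr : (1 - e) * x * e = 0) : Commute e x := by
  rw [mul_sub, mul_one, sub_eq_zero] at hl
  rw [sub_mul, one_mul, sub_mul, sub_eq_zero] at hr
  exact hl.trans hr.symm

namespace IsUniquelySqrtJCleanRing

theorem isSqrtJCleanRing (hR : IsUniquelySqrtJCleanRing R) : IsSqrtJCleanRing R := by
  intro a
  obtain ⟨⟨e, z⟩, h, -⟩ := hR a
  exact ⟨e, z, h⟩

theorem mul_mul_one_sub_eq_zero (hR : IsUniquelySqrtJCleanRing R) (he : IsIdempotentElem e)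
    (x : R) : e * x * (1 - e) = 0 := by
  have pair_eq : (e, e * x * (1 - e)) = (e + e * x * (1 - e), 0) :=
    (hR (e + e * x * (1 - e))).unique
      ⟨he, mem_sqrtJ_of_isNilpotent (isNilpotent_mul_mul_one_sub he x), rfl⟩
      ⟨isIdempotentElem_add_mul_mul_one_sub he x, mem_sqrtJ_of_isNilpotent .zero,
        (add_zero _).symm⟩
  exact congrArg Prod.snd pair_eq

theorem commute_of_isIdempotentElem (hR : IsUniquelySqrtJCleanRing R) (he : IsIdempotentElem e)
    (x : R) : Commute e x := by
  refine commute_of_mul_mul_one_sub_eq_zero (hR.mul_mul_one_sub_eq_zero he x) ?_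
  simpa only [sub_sub_cancel] using hR.mul_mul_one_sub_eq_zero he.one_sub x

end IsUniquelySqrtJCleanRing

theorem IsSqrtJCleanRing.isUniquelySqrtJCleanRing (hR : IsSqrtJCleanRing R)
    (central : ∀ e : R, IsIdempotentElem e → ∀ x : R, Commute e x) :
    IsUniquelySqrtJCleanRing R := by
  intro a
  obtain ⟨e, z, he, hz, rfl⟩ := hR a
  refine ⟨(e, z), ⟨he, hz, rfl⟩, ?_⟩
  rintro ⟨f, w⟩ ⟨hf, hw, hsum : e + z = f + w⟩
  have hzw : Commute z w := by
    rw [← sub_eq_of_eq_add' hsum]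
    exact ((central e he z).symm.add_right (.refl z)).sub_right (central f hf z).symm
  obtain ⟨rfl, rfl⟩ :=
    eq_and_eq_of_add_eq_add_of_commute he hf hz hw (central e he f) hzw hsum
  rfl

end

theorem uniquelySqrtJClean_iff_sqrtJClean_central_idempotents (R : Type*) [Ring R] :
    IsUniquelySqrtJCleanRing R ↔
      (IsSqrtJCleanRing R ∧ ∀ e : R, IsIdempotentElem e → ∀ x : R, e * x = x * e) :=
  ⟨fun hR => ⟨hR.isSqrtJCleanRing, fun _ he x => hR.commute_of_isIdempotentElem he x⟩,
    fun ⟨hR, central⟩ => hR.isUniquelySqrtJCleanRing central⟩
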